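/- Let s, x ∈ ℍ with Q_{c,s}(x) := s² − 2(re x)·s + ‖x‖² ≠ 0, and let α ∈ ℕ. Define F : ℍ → ℍ by F(y) = (s − ȳ) · (s² − 2(re y)·s + ‖y‖²)^{−α}. Then F is (real) differentiable at x and (D̄ F)(x) := ∂₀F(x) − i·∂₁F(x) − j·∂₂F(x) − k·∂₃F(x) = 2(1 − α) · Q_{c,s}(x)^{−α} + 4α · (s − x̄) · (s − re x) · Q_{c,s}(x)^{−α−1}. -/

import Mathlib

open Quaternion

/-- The basis quaternion `i`. -/
def qi : ℍ[ℝ] := ⟨0, 1, 0, 0⟩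
/-- The basis quaternion `j`. -/
def qj : ℍ[ℝ] := ⟨0, 0, 1, 0⟩
/-- The basis quaternion `k`. -/
def qk : ℍ[ℝ] := ⟨0, 0, 0, 1⟩

/-- The conjugate Cauchy–Fueter operator
`(D̄ F)(x) = ∂₀F(x) − i·∂₁F(x) − j·∂₂F(x) − k·∂₃F(x)`, where `∂_μF(x)` is the real Fréchet
derivative of `F` at `x` applied to the basis quaternion `e_μ`. -/
noncomputable def DiracBar (F : ℍ[ℝ] → ℍ[ℝ]) (x : ℍ[ℝ]) : ℍ[ℝ] :=
  fderiv ℝ F x 1 - qi * fderiv ℝ F x qi - qj * fderiv ℝ F x qj - qk * fderiv ℝ F x qk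

/-- The commutative pseudo-Cauchy kernel `Q_{c,s}(y) = s² − 2(re y)·s + ‖y‖²`. -/
noncomputable def Qcs (s y : ℍ[ℝ]) : ℍ[ℝ] :=
  s ^ 2 - 2 * ((y.re : ℝ) : ℍ[ℝ]) * s + ((‖y‖ ^ 2 : ℝ) : ℍ[ℝ])

/-!
Write `e_μ` for the basis quaternions. The derivative `h ↦ 2⟪x, h⟫ - 2⟪1, h⟫ s` of `Q_{c,s}` at `x`
takes values in `ℝ[s]`, hence commutes with `Q_{c,s}(x)`, so powers of `Q_{c,s}` obey the
commutative power rule. Since `∑ μ, star e_μ * ⟪v, e_μ⟫ = star v` and `D̄(s - ȳ) = 2`, the product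
rule with exponent `n = -α` gives
`2 Q ^ n + 2n (x̄ (s - x̄) - (s - x̄) s) Q ^ (n - 1)`,
and `x̄² + ‖x‖² = 2 (re x) x̄` turns the bracket into `Q - 2 (s - x̄)(s - re x)`.
-/

open scoped RealInnerProductSpace

section PowerRule

variable {𝕜 E R : Type*} [NontriviallyNormedField 𝕜] [NormedAddCommGroup E] [NormedSpace 𝕜 E]

theorem hasFDerivAt_pow_of_commute [NormedRing R] [NormedAlgebra 𝕜 R] {f : E → R}
    {f' : E →L[𝕜] R} {x : E} (hf : HasFDerivAt f f' x) (hc : ∀ h, Commute (f x) (f' h)) (n : ℕ) :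
    HasFDerivAt (fun y => f y ^ n) (n • f x ^ (n - 1) • f') x := by
  refine (hf.fun_pow' n).congr_fderiv ?_
  ext h
  have hterm : ∀ i ∈ Finset.range n,
      f x ^ (n - 1 - i) * f' h * f x ^ i = f x ^ (n - 1) * f' h := by
    intro i hi
    have hexp : n - 1 - i + i = n - 1 :=
      Nat.sub_add_cancel (Nat.le_sub_one_of_lt (Finset.mem_range.1 hi))
    rw [mul_assoc, ← ((hc h).pow_left i).eq, ← mul_assoc, ← pow_add, hexp]
  simp [Finset.sum_congr rfl hterm]

variable [NormedDivisionRing R] [NormedAlgebra 𝕜 R] {f : E → R} {f' : E →L[𝕜] R} {x : E}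

theorem hasFDerivAt_inv_of_commute (hf : HasFDerivAt f f' x) (hx : f x ≠ 0)
    (hc : ∀ h, Commute (f x) (f' h)) :
    HasFDerivAt (fun y => (f y)⁻¹) (-((f x)⁻¹ ^ 2) • f') x := by
  refine ((hasFDerivAt_inv' (𝕜 := 𝕜) hx).comp x hf).congr_fderiv ?_
  ext h
  simp [sq, mul_assoc, (hc h).symm.inv_right₀.eq]

theorem hasFDerivAt_zpow_of_commute (hf : HasFDerivAt f f' x) (hx : f x ≠ 0)
    (hc : ∀ h, Commute (f x) (f' h)) (n : ℤ) :
    HasFDerivAt (fun y => f y ^ n) (n • f x ^ (n - 1) • f') x := by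
  obtain ⟨m, rfl | rfl⟩ := n.eq_nat_or_neg
  · have hpow := hasFDerivAt_pow_of_commute hf hc m
    cases m with
    | zero => simpa using hpow
    | succ m =>
      have hexp : f x ^ (((m + 1 : ℕ) : ℤ) - 1) = f x ^ m := by simp
      simpa only [hexp, zpow_natCast, natCast_zsmul, Nat.add_sub_cancel] using hpow
  · have hcInv : ∀ h, Commute (f x)⁻¹ ((-((f x)⁻¹ ^ 2) • f') h) := fun h =>
      ((Commute.refl _).pow_right 2).neg_right.mul_right (hc h).inv_left₀
    have hpow := hasFDerivAt_pow_of_commute (hasFDerivAt_inv_of_commute hf hx hc) hcInv m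
    simp only [zpow_neg, zpow_natCast, ← inv_pow]
    refine hpow.congr_fderiv ?_
    cases m with
    | zero => simp
    | succ m =>
      have hexp : f x ^ (-((m + 1 : ℕ) : ℤ) - 1) = (f x)⁻¹ ^ m * (f x)⁻¹ ^ 2 := by
        rw [← pow_add, inv_pow, ← zpow_natCast, ← zpow_neg]
        congr 1
      rw [hexp, mul_smul, neg_smul, neg_smul, natCast_zsmul, smul_neg, smul_neg,
        Nat.add_sub_cancel]

end PowerRule

/-- The value of the conjugate Cauchy–Fueter operator on a map with real derivative `L`, that is
`∑ μ, star e_μ * L e_μ`. It commutes with multiplication on the right by a quaternion, which is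
encoded as linearity over the opposite ring. -/
noncomputable def diracBarSymbol : (ℍ[ℝ] →L[ℝ] ℍ[ℝ]) →ₗ[ℍ[ℝ]ᵐᵒᵖ] ℍ[ℝ] where
  toFun L := L 1 - qi * L qi - qj * L qj - qk * L qk
  map_add' L M := by
    simp only [_root_.add_apply, mul_add]
    abel
  map_smul' q L := by
    simp [sub_mul, mul_assoc]

theorem diracBar_eq_diracBarSymbol {F : ℍ[ℝ] → ℍ[ℝ]} {F' : ℍ[ℝ] →L[ℝ] ℍ[ℝ]} {x : ℍ[ℝ]}
    (hF : HasFDerivAt F F' x) : DiracBar F x = diracBarSymbol F' := by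
  rw [DiracBar, hF.fderiv]
  rfl

theorem star_eq_re_sub_imI_sub_imJ_sub_imK (v : ℍ[ℝ]) :
    star v = (v.re : ℍ[ℝ]) - v.imI • qi - v.imJ • qj - v.imK • qk := by
  ext <;> simp only [re_star, imI_star, imJ_star, imK_star, re_sub, imI_sub, imJ_sub, imK_sub,
    re_coe, imI_coe, imJ_coe, imK_coe, re_smul, imI_smul, imJ_smul, imK_smul] <;>
    simp [qi, qj, qk]

theorem diracBarSymbol_innerSL_smulRight (v q : ℍ[ℝ]) :
    diracBarSymbol ((innerSL ℝ v).smulRight q) = star v * q := by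
  have hone : ⟪v, 1⟫ = v.re := by simp [inner_def]
  have hi : ⟪v, qi⟫ = v.imI := by
    simp only [inner_def, re_mul, re_star, imI_star, imJ_star, imK_star]
    simp [qi]
  have hj : ⟪v, qj⟫ = v.imJ := by
    simp only [inner_def, re_mul, re_star, imI_star, imJ_star, imK_star]
    simp [qj]
  have hk : ⟪v, qk⟫ = v.imK := by
    simp only [inner_def, re_mul, re_star, imI_star, imJ_star, imK_star]
    simp [qk]
  simp [diracBarSymbol, hone, hi, hj, hk, star_eq_re_sub_imI_sub_imJ_sub_imK, sub_mul,
    coe_mul_eq_smul]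

theorem diracBarSymbol_id : diracBarSymbol (.id ℝ ℍ[ℝ]) = 4 := by
  have hi : qi * qi = -1 := by
    ext <;> simp only [re_mul, imI_mul, imJ_mul, imK_mul] <;> simp [qi]
  have hj : qj * qj = -1 := by
    ext <;> simp only [re_mul, imI_mul, imJ_mul, imK_mul] <;> simp [qj]
  have hk : qk * qk = -1 := by
    ext <;> simp only [re_mul, imI_mul, imJ_mul, imK_mul] <;> simp [qk]
  change 1 - qi * qi - qj * qj - qk * qk = 4
  rw [hi, hj, hk]
  norm_num

theorem diracBar_mul {F G : ℍ[ℝ] → ℍ[ℝ]} {G' : ℍ[ℝ] →L[ℝ] ℍ[ℝ]} {x : ℍ[ℝ]}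
    (hF : DifferentiableAt ℝ F x) (hG : HasFDerivAt G G' x) :
    DiracBar (fun y => F y * G y) x = DiracBar F x * G x + diracBarSymbol (F x • G') := by
  rw [diracBar_eq_diracBarSymbol (hF.hasFDerivAt.fun_mul' hG),
    diracBar_eq_diracBarSymbol hF.hasFDerivAt, map_add, add_comm]
  congr 1
  exact map_smul diracBarSymbol (MulOpposite.op (G x)) _

theorem hasFDerivAt_quaternion_star (x : ℍ[ℝ]) :
    HasFDerivAt star
      ((2 : ℕ) • (innerSL ℝ (1 : ℍ[ℝ])).smulRight (1 : ℍ[ℝ]) - ContinuousLinearMap.id ℝ ℍ[ℝ])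
      x := by
  refine (ContinuousLinearMap.hasFDerivAt _).congr_of_eventuallyEq (.of_forall fun y => ?_)
  simp [star_eq_two_re_sub, inner_def, two_smul, two_mul, ← coe_mul_eq_smul]

theorem diracBar_const_sub_star (s x : ℍ[ℝ]) : DiracBar (fun y => s - star y) x = 2 := by
  rw [diracBar_eq_diracBarSymbol ((hasFDerivAt_quaternion_star x).const_sub s), map_neg, map_sub,
    map_nsmul, diracBarSymbol_innerSL_smulRight, diracBarSymbol_id]
  norm_num

/-- The real Fréchet derivative `h ↦ 2⟪x, h⟫ - 2 (re h) s` of `Qcs s` at `x`, with `re h` written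
as `⟪1, h⟫`. -/
noncomputable def QcsDeriv (s x : ℍ[ℝ]) : ℍ[ℝ] →L[ℝ] ℍ[ℝ] :=
  (2 : ℕ) • ((innerSL ℝ x).smulRight (1 : ℍ[ℝ]) - (innerSL ℝ (1 : ℍ[ℝ])).smulRight s)

theorem hasFDerivAt_Qcs (s x : ℍ[ℝ]) : HasFDerivAt (Qcs s) (QcsDeriv s x) x := by
  have hQ : Qcs s = fun y => s ^ 2 - (2 * ⟪1, y⟫) • s + (‖y‖ ^ 2) • (1 : ℍ[ℝ]) := by
    ext1 y
    have hre : ⟪1, y⟫ = y.re := by simp [inner_def]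
    rw [Qcs, hre, ← coe_mul_eq_smul, ← coe_mul_eq_smul, mul_one, coe_mul]
    rfl
  have hRe := (((innerSL ℝ (1 : ℍ[ℝ])).hasFDerivAt (x := x)).const_mul 2).smul_const s
  have hNorm := (hasStrictFDerivAt_norm_sq x).hasFDerivAt.smul_const (1 : ℍ[ℝ])
  rw [hQ]
  refine ((hRe.const_sub (s ^ 2)).add hNorm).congr_fderiv ?_
  ext1 h
  simp only [two_smul, add_apply, neg_apply, ContinuousLinearMap.smulRight_apply,
    coe_innerSL_apply, QcsDeriv, sub_apply]
  module

theorem commute_Qcs_self (s x : ℍ[ℝ]) : Commute (Qcs s x) s := by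
  have hre : Commute (2 * (x.re : ℍ[ℝ])) s :=
    (Nat.cast_commute 2 s).mul_left (coe_commute _ _)
  exact (((Commute.refl s).pow_left 2).sub_left (hre.mul_left (.refl s))).add_left
    (coe_commute _ _)

theorem commute_Qcs_QcsDeriv (s x h : ℍ[ℝ]) : Commute (Qcs s x) (QcsDeriv s x h) :=
  (((Commute.one_right _).smul_right ⟪x, h⟫).sub_right
    ((commute_Qcs_self s x).smul_right ⟪1, h⟫)).smul_right 2

theorem diracBarSymbol_smul_QcsDeriv (p s x : ℍ[ℝ]) :
    diracBarSymbol (p • QcsDeriv s x) = 2 * (star x * p - p * s) := by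
  have hsmul (v q : ℍ[ℝ]) : p • (innerSL ℝ v).smulRight q = (innerSL ℝ v).smulRight (p * q) := by
    ext1 h
    simp
  rw [QcsDeriv, smul_comm, smul_sub, hsmul, hsmul, map_nsmul, map_sub,
    diracBarSymbol_innerSL_smulRight, diracBarSymbol_innerSL_smulRight]
  simp

theorem star_mul_sub_star_sub_sub_star_mul (s x : ℍ[ℝ]) :
    star x * (s - star x) - (s - star x) * s =
      Qcs s x - 2 * ((s - star x) * (s - (x.re : ℍ[ℝ]))) := by
  have hnorm : star x * x = ((‖x‖ ^ 2 : ℝ) : ℍ[ℝ]) := by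
    rw [star_mul_self, normSq_eq_norm_mul_self, sq]
  have hstar : star x * star x = 2 * star x * (x.re : ℍ[ℝ]) - ((‖x‖ ^ 2 : ℝ) : ℍ[ℝ]) := by
    nth_rw 2 [star_eq_two_re_sub]
    rw [mul_sub, hnorm, two_mul, two_mul, add_mul, coe_add, mul_add]
  have hcomm : (x.re : ℍ[ℝ]) * s = s * (x.re : ℍ[ℝ]) := coe_commutes _ _
  simp only [Qcs, mul_sub, sub_mul, hstar, mul_assoc, hcomm]
  noncomm_ring

theorem statement12_general (s x : ℍ[ℝ]) (hQ : Qcs s x ≠ 0) (α : ℤ) :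
    DifferentiableAt ℝ (fun y => (s - star y) * Qcs s y ^ (-α)) x ∧
    DiracBar (fun y => (s - star y) * Qcs s y ^ (-α)) x
      = ((2 * (1 - (α : ℝ)) : ℝ) : ℍ[ℝ]) * Qcs s x ^ (-α)
        + ((4 * (α : ℝ) : ℝ) : ℍ[ℝ])
            * ((s - star x) * (s - ((x.re : ℝ) : ℍ[ℝ])) * Qcs s x ^ (-α - 1)) := by
  have hstar : DifferentiableAt ℝ (fun y => s - star y) x :=
    ((hasFDerivAt_quaternion_star x).const_sub s).differentiableAt
  have hpow := hasFDerivAt_zpow_of_commute (hasFDerivAt_Qcs s x) hQ (commute_Qcs_QcsDeriv s x) (-α)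
  refine ⟨hstar.mul hpow.differentiableAt, ?_⟩
  have hsymbol : diracBarSymbol ((s - star x) • Qcs s x ^ (-α - 1) • QcsDeriv s x) =
      2 * ((Qcs s x - 2 * ((s - star x) * (s - (x.re : ℍ[ℝ])))) * Qcs s x ^ (-α - 1)) := by
    have hcomm : Qcs s x ^ (-α - 1) * s = s * Qcs s x ^ (-α - 1) :=
      ((commute_Qcs_self s x).zpow_left₀ _).eq
    rw [smul_smul, diracBarSymbol_smul_QcsDeriv, ← star_mul_sub_star_sub_sub_star_mul,
      mul_assoc (s - star x) _ s, hcomm]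
    simp only [sub_mul, mul_assoc]
  have hQP : Qcs s x ^ (-α) = Qcs s x * Qcs s x ^ (-α - 1) := by
    rw [← zpow_one_add₀ hQ, add_sub_cancel]
  rw [diracBar_mul hstar hpow, diracBar_const_sub_star, smul_comm, map_zsmul, hsymbol, hQP]
  simp only [coe_mul_eq_smul, two_mul, sub_mul, add_mul, mul_assoc]
  module

/-- For `Q_{c,s}(x) ≠ 0` and `α ∈ ℕ`, the map `F(y) = (s − ȳ)·Q_{c,s}(y)^{−α}` is real
differentiable at `x` and
`(D̄ F)(x) = 2(1 − α)·Q_{c,s}(x)^{−α} + 4α·(s − x̄)·(s − re x)·Q_{c,s}(x)^{−α−1}`. -/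
theorem statement12 (s x : ℍ[ℝ]) (hQ : Qcs s x ≠ 0) (α : ℕ) :
    DifferentiableAt ℝ (fun y => (s - star y) * Qcs s y ^ (-(α : ℤ))) x ∧
    DiracBar (fun y => (s - star y) * Qcs s y ^ (-(α : ℤ))) x
      = ((2 * (1 - (α : ℝ)) : ℝ) : ℍ[ℝ]) * Qcs s x ^ (-(α : ℤ))
        + ((4 * (α : ℝ) : ℝ) : ℍ[ℝ])
            * ((s - star x) * (s - ((x.re : ℝ) : ℍ[ℝ])) * Qcs s x ^ (-(α : ℤ) - 1)) :=
  mod_cast statement12_general s x hQ α
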